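/- arXiv:2603.10550 — 2 statements merged into one kernel-verified Lean document; each statement's English description precedes it below -/
import Mathlib

section
/- Let N ≥ 2 and let Ω ⊂ ℝ^N be a bounded Lipschitz domain. Then the Γ-liminf inequality holds: for every u ∈ L²₀(Ω), every increasing sequence {s_k} ⊂ (0,1) with s_k → 1⁻, and every sequence {u_k} ⊂ L²₀(Ω) with ‖u_k − u‖_{L²(Ω)} → 0, one has F₁(u) ≤ liminf_{k→∞} F_{s_k}(u_k). -/
open MeasureTheory Filter Topology Bornology Set
open scoped ENNReal NNReal

noncomputable section

namespace FracNeumann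

abbrev Euc (N : ℕ) : Type := EuclideanSpace ℝ (Fin N)

/-- The kernel weight `|x - y| ^ (N + 2s)`. -/
def kern (N : ℕ) (s : ℝ) (x y : Euc N) : ℝ := ‖x - y‖ ^ ((N : ℝ) + 2 * s)

/-- The region `ℝ^{2N} \ (Ω^c × Ω^c)`, where `Ω^c := ℝ^N \ closure Ω`. -/
def reg (N : ℕ) (Ω : Set (Euc N)) : Set (Euc N × Euc N) :=
  {q | q.1 ∈ closure Ω ∨ q.2 ∈ closure Ω}

/-- The squared seminorm `[u]_{H^s_{Ω,0}}²`, as an extended real number. -/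
def semiSq (N : ℕ) (s : ℝ) (Ω : Set (Euc N)) (u : Euc N → ℝ) : ℝ≥0∞ :=
  ∫⁻ q in reg N Ω, ENNReal.ofReal ((u q.1 - u q.2) ^ 2 / kern N s q.1 q.2)

/-- `∫_Ω u²`, as an extended real number. -/
def l2sq (N : ℕ) (Ω : Set (Euc N)) (u : Euc N → ℝ) : ℝ≥0∞ :=
  ∫⁻ x in Ω, ENNReal.ofReal ((u x) ^ 2)

/-- Membership in `H^s_{Ω,0}`. -/
def memHs (N : ℕ) (s : ℝ) (Ω : Set (Euc N)) (u : Euc N → ℝ) : Prop :=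
  Measurable u ∧ l2sq N Ω u < ⊤ ∧ semiSq N s Ω u < ⊤

/-- The squared Gagliardo seminorm `[u]_{H^s(Ω)}²`. -/
def semiSqOn (N : ℕ) (s : ℝ) (Ω : Set (Euc N)) (u : Euc N → ℝ) : ℝ≥0∞ :=
  ∫⁻ q in Ω ×ˢ Ω, ENNReal.ofReal ((u q.1 - u q.2) ^ 2 / kern N s q.1 q.2)

/-- Membership in `H^s(Ω)` (for functions defined on all of `ℝ^N`). -/
def memHsOn (N : ℕ) (s : ℝ) (Ω : Set (Euc N)) (u : Euc N → ℝ) : Prop :=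
  Measurable u ∧ l2sq N Ω u < ⊤ ∧ semiSqOn N s Ω u < ⊤

/-- The normalizing constant `c_{N,s}` of the fractional Laplacian. -/
def cNs (N : ℕ) (s : ℝ) : ℝ :=
  (4 : ℝ) ^ s * s * Real.Gamma ((N : ℝ) / 2 + s) /
    (Real.pi ^ ((N : ℝ) / 2) * Real.Gamma (1 - s))

/-- The nonlocal Neumann derivative `𝒩_s u`. -/
def Nneu (N : ℕ) (s : ℝ) (Ω : Set (Euc N)) (u : Euc N → ℝ) (x : Euc N) : ℝ :=
  cNs N s * ∫ y in Ω, (u x - u y) / kern N s x y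

/-- Membership in `H̃^s_{Ω,0}`: members of `H^s_{Ω,0}` with `𝒩_s u = 0` a.e. in `Ω^c`. -/
def memHsTilde (N : ℕ) (s : ℝ) (Ω : Set (Euc N)) (u : Euc N → ℝ) : Prop :=
  memHs N s Ω u ∧ ∀ᵐ x ∂(volume.restrict (closure Ω)ᶜ), Nneu N s Ω u x = 0

/-- The first nontrivial Neumann eigenvalue `μ₁^{(s)}(Ω)`. -/
def mu1 (N : ℕ) (s : ℝ) (Ω : Set (Euc N)) : ℝ :=
  sInf {t : ℝ | ∃ u : Euc N → ℝ, memHs N s Ω u ∧ (∫ x in Ω, (u x) ^ 2) = 1 ∧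
    (∫ x in Ω, u x) = 0 ∧ t = cNs N s / 2 * (semiSq N s Ω u).toReal}

/-- The bilinear form (without the constant). -/
def bform (N : ℕ) (s : ℝ) (Ω : Set (Euc N)) (u v : Euc N → ℝ) : ℝ :=
  ∫ q in reg N Ω, (u q.1 - u q.2) * (v q.1 - v q.2) / kern N s q.1 q.2

/-- First nontrivial eigenfunction: weak solution associated to `μ₁^{(s)}(Ω)`. -/
def IsFirstEigen (N : ℕ) (s : ℝ) (Ω : Set (Euc N)) (u : Euc N → ℝ) : Prop :=
  memHs N s Ω u ∧ ¬ (u =ᵐ[volume.restrict Ω] 0) ∧ (∫ x in Ω, u x) = 0 ∧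
    ∀ v : Euc N → ℝ, memHs N s Ω v →
      cNs N s / 2 * bform N s Ω u v = mu1 N s Ω * ∫ x in Ω, u x * v x

/-- Reflection `σ_e(x) = x - 2(x·e)e` across the hyperplane `{x·e = 0}`. -/
def reflect (N : ℕ) (e x : Euc N) : Euc N := x - (2 * (inner ℝ x e : ℝ)) • e

/-- The polarization `P_e u` with respect to the hyperplane `{x·e = 0}`. -/
def polarize (N : ℕ) (e : Euc N) (u : Euc N → ℝ) (x : Euc N) : ℝ :=
  if 0 ≤ (inner ℝ x e : ℝ) then min (u x) (u (reflect N e x))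
  else max (u x) (u (reflect N e x))

/-- Foliated Schwarz symmetry with respect to `p`. -/
def FoliatedSchwarz (N : ℕ) (p : Euc N) (u : Euc N → ℝ) : Prop :=
  ∃ uh : ℝ → ℝ → ℝ, (∀ r : ℝ, AntitoneOn (uh r) (Icc 0 Real.pi)) ∧
    ∀ x : Euc N, x ≠ 0 → u x = uh ‖x‖ (Real.arccos ((inner ℝ x p : ℝ) / ‖x‖))

/-- Radial symmetry (pointwise). -/
def Radial (N : ℕ) (u : Euc N → ℝ) : Prop := ∃ f : ℝ → ℝ, ∀ x, u x = f ‖x‖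

/-- Radial symmetry (a.e.). -/
def RadialAE (N : ℕ) (u : Euc N → ℝ) : Prop :=
  ∃ f : ℝ → ℝ, ∀ᵐ x : Euc N ∂volume, u x = f ‖x‖

/-- The set `{x ∈ Ω : u x ≠ 0}` has exactly two connected components. -/
def TwoNodal (N : ℕ) (Ω : Set (Euc N)) (u : Euc N → ℝ) : Prop :=
  Nat.card (ConnectedComponents {x : Euc N // x ∈ Ω ∧ u x ≠ 0}) = 2

/-- Bounded Lipschitz domain: open, bounded, connected, and near every boundary point the set
is the region above the graph of a Lipschitz function in some direction `e`. -/
def IsLipschitzDomain (N : ℕ) (Ω : Set (Euc N)) : Prop :=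
  IsOpen Ω ∧ IsBounded Ω ∧ IsConnected Ω ∧
    ∀ x ∈ frontier Ω, ∃ e : Euc N, ‖e‖ = 1 ∧ ∃ r : ℝ, 0 < r ∧
      ∃ (L : NNReal) (f : Euc N → ℝ), LipschitzWith L f ∧
        ∀ y ∈ Metric.ball x r,
          (y ∈ Ω ↔ f (y - ((inner ℝ y e : ℝ)) • e) < (inner ℝ y e : ℝ))

/-- `g` is a weak gradient of `u` in `Ω`, square-integrable on `Ω`. -/
def IsWeakGradient (N : ℕ) (Ω : Set (Euc N)) (u : Euc N → ℝ) (g : Euc N → Euc N) : Prop :=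
  Measurable g ∧ (∫⁻ x in Ω, ENNReal.ofReal (‖g x‖ ^ 2)) < ⊤ ∧
    ∀ φ : Euc N → ℝ, ContDiff ℝ (⊤ : ℕ∞) φ → HasCompactSupport φ → tsupport φ ⊆ Ω →
      ∀ i : Fin N, (∫ x in Ω, u x * fderiv ℝ φ x (EuclideanSpace.single i 1)) =
        - ∫ x in Ω, g x i * φ x

/-- Membership in `H¹(Ω)`. -/
def memH1 (N : ℕ) (Ω : Set (Euc N)) (u : Euc N → ℝ) : Prop :=
  Measurable u ∧ l2sq N Ω u < ⊤ ∧ ∃ g, IsWeakGradient N Ω u g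

/-- `∫_Ω |∇u|²`, as an extended real number. -/
def gradSq (N : ℕ) (Ω : Set (Euc N)) (u : Euc N → ℝ) : ℝ≥0∞ :=
  ⨅ (g : Euc N → Euc N) (_ : IsWeakGradient N Ω u g), ∫⁻ x in Ω, ENNReal.ofReal (‖g x‖ ^ 2)

/-- Rayleigh quotient for the fractional Neumann problem. -/
def rayleighS (N : ℕ) (s : ℝ) (Ω : Set (Euc N)) (u : Euc N → ℝ) : ℝ≥0∞ :=
  ENNReal.ofReal (cNs N s / 2) * semiSq N s Ω u / l2sq N Ω u

/-- Rayleigh quotient for the local Neumann problem. -/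
def rayleigh1 (N : ℕ) (Ω : Set (Euc N)) (u : Euc N → ℝ) : ℝ≥0∞ :=
  gradSq N Ω u / l2sq N Ω u

/-- The min-max value `μ_n^{(s)}(Ω)` over `n`-dimensional subspaces of `H^s_{Ω,0} ∩ L²₀(Ω)`. -/
def muNs (N : ℕ) (s : ℝ) (Ω : Set (Euc N)) (n : ℕ) : ℝ≥0∞ :=
  ⨅ (A : Submodule ℝ (Euc N → ℝ)) (_ : Module.finrank ℝ A = n ∧
      (∀ u ∈ A, memHs N s Ω u ∧ (∫ x in Ω, u x) = 0) ∧
      (∀ u ∈ A, u =ᵐ[(volume : Measure (Euc N))] 0 → u = 0)),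
    ⨆ (u : Euc N → ℝ) (_ : u ∈ A ∧ u ≠ 0), rayleighS N s Ω u

/-- The min-max value over `n`-dimensional subspaces of `H̃^s_{Ω,0} ∩ L²₀(Ω)`. -/
def muNsTilde (N : ℕ) (s : ℝ) (Ω : Set (Euc N)) (n : ℕ) : ℝ≥0∞ :=
  ⨅ (A : Submodule ℝ (Euc N → ℝ)) (_ : Module.finrank ℝ A = n ∧
      (∀ u ∈ A, memHsTilde N s Ω u ∧ (∫ x in Ω, u x) = 0) ∧
      (∀ u ∈ A, u =ᵐ[(volume : Measure (Euc N))] 0 → u = 0)),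
    ⨆ (u : Euc N → ℝ) (_ : u ∈ A ∧ u ≠ 0), rayleighS N s Ω u

/-- The min-max value `μ_n^{(1)}(Ω)` over `n`-dimensional subspaces of `H¹(Ω) ∩ L²₀(Ω)`. -/
def muN1 (N : ℕ) (Ω : Set (Euc N)) (n : ℕ) : ℝ≥0∞ :=
  ⨅ (A : Submodule ℝ (Euc N → ℝ)) (_ : Module.finrank ℝ A = n ∧
      (∀ u ∈ A, memH1 N Ω u ∧ (∫ x in Ω, u x) = 0) ∧
      (∀ u ∈ A, u =ᵐ[volume.restrict Ω] 0 → u = 0)),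
    ⨆ (u : Euc N → ℝ) (_ : u ∈ A ∧ u ≠ 0), rayleigh1 N Ω u

/-- `μ_n^{(s)}(Ω)` including `μ₀^{(s)}(Ω) := 0`. -/
def muNsFull (N : ℕ) (s : ℝ) (Ω : Set (Euc N)) (n : ℕ) : ℝ≥0∞ :=
  if n = 0 then 0 else muNs N s Ω n

/-- `μ_n^{(1)}(Ω)` including `μ₀^{(1)}(Ω) := 0`. -/
def muN1Full (N : ℕ) (Ω : Set (Euc N)) (n : ℕ) : ℝ≥0∞ :=
  if n = 0 then 0 else muN1 N Ω n

/-- The squared `H^s_{Ω,0}`-seminorm of the `s`-minimal extension of `u`: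
the minimal value of `[v]²` over `v ∈ H^s_{Ω,0}` with `v = u` a.e. in `Ω`. -/
def minExtSemiSq (N : ℕ) (s : ℝ) (Ω : Set (Euc N)) (u : Euc N → ℝ) : ℝ≥0∞ :=
  ⨅ (v : Euc N → ℝ) (_ : memHs N s Ω v ∧ v =ᵐ[volume.restrict Ω] u), semiSq N s Ω v

/-- `ω_{N-1}`: volume of the unit ball of `ℝ^{N-1}`. -/
def omegaPrev (N : ℕ) : ℝ := (volume (Metric.ball (0 : Euc (N - 1)) 1)).toReal

/-- Membership in `L²₀(Ω)`. -/
def memL20 (N : ℕ) (Ω : Set (Euc N)) (u : Euc N → ℝ) : Prop :=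
  Measurable u ∧ l2sq N Ω u < ⊤ ∧ (∫ x in Ω, u x) = 0

/-- The functional `F_s` (value `+∞` outside `H^s(Ω)`). -/
def Fs (N : ℕ) (s : ℝ) (Ω : Set (Euc N)) (u : Euc N → ℝ) : ℝ≥0∞ :=
  ENNReal.ofReal (1 - s) * minExtSemiSq N s Ω u

/-- The functional `F₁` (value `+∞` outside `H¹(Ω)`). -/
def F1 (N : ℕ) (Ω : Set (Euc N)) (u : Euc N → ℝ) : ℝ≥0∞ :=
  ENNReal.ofReal (omegaPrev N / (2 * N)) * gradSq N Ω u

end FracNeumann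
namespace FracNeumann


/-- Invariance of the integral under a linear isometry. -/
lemma integral_isom {N : ℕ} (R : Euc N ≃ₗᵢ[ℝ] Euc N) (F : Euc N → ℝ) :
    ∫ h, F (R h) = ∫ h, F h :=
  (R.measurePreserving).integral_comp R.toHomeomorph.measurableEmbedding F

lemma moment_off {N : ℕ} (f : ℝ → ℝ) (i j : Fin N) (hij : i ≠ j) :
    ∫ h : Euc N, f ‖h‖ * (h i * h j) = 0 := by
  let R : Euc N ≃ₗᵢ[ℝ] Euc N := LinearIsometryEquiv.piLpCongrRight 2
    (fun k => if k = i then LinearIsometryEquiv.neg ℝ else LinearIsometryEquiv.refl ℝ ℝ)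
  have h1 := integral_isom R (fun h => f ‖h‖ * (h i * h j))
  have hi : ∀ h : Euc N, R h i = - h i := by intro h; simp [R]
  have hj : ∀ h : Euc N, R h j = h j := by intro h; simp [R, hij.symm]
  simp only [LinearIsometryEquiv.norm_map, hi, hj] at h1
  have h2 : ∫ h : Euc N, f ‖h‖ * (-h i * h j) = - ∫ h : Euc N, f ‖h‖ * (h i * h j) := by
    rw [← integral_neg]; congr 1; ext h; ring
  linarith

lemma moment_swap {N : ℕ} (f : ℝ → ℝ) (i j : Fin N) :
    ∫ h : Euc N, f ‖h‖ * (h i * h i) = ∫ h : Euc N, f ‖h‖ * (h j * h j) := by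
  let R : Euc N ≃ₗᵢ[ℝ] Euc N := LinearIsometryEquiv.piLpCongrLeft 2 ℝ ℝ (Equiv.swap i j)
  have h1 := integral_isom R (fun h => f ‖h‖ * (h j * h j))
  have hi : ∀ h : Euc N, R h j = h i := by
    intro h; simp [R, LinearIsometryEquiv.piLpCongrLeft_apply]
  simp only [LinearIsometryEquiv.norm_map, hi] at h1
  exact h1

lemma rho_integrable {N : ℕ} (f : ℝ → ℝ) (hfm : Measurable f) (C δ : ℝ)
    (hf0 : ∀ r, 0 ≤ f r) (hfC : ∀ r, f r ≤ C) (hsupp : ∀ r, δ ≤ r → f r = 0) :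
    Integrable (fun h : Euc N => f ‖h‖) := by
  have : Integrable ((Metric.ball (0 : Euc N) δ).indicator (fun _ => C)) := by
    rw [integrable_indicator_iff measurableSet_ball]
    exact integrableOn_const (by exact measure_ball_lt_top.ne)
  refine this.mono' (hfm.comp measurable_norm).aestronglyMeasurable (ae_of_all _ fun h => ?_)
  by_cases hh : ‖h‖ < δ
  · rw [indicator_of_mem (by simpa using hh), Real.norm_of_nonneg (hf0 _)]; exact hfC _
  · rw [hsupp _ (not_lt.1 hh)]; simp [indicator_of_notMem (show h ∉ Metric.ball (0 : Euc N) δ by simpa using hh)]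

lemma rho_mul_integrable {N : ℕ} (f : ℝ → ℝ) (hfm : Measurable f) (C δ : ℝ)
    (hf0 : ∀ r, 0 ≤ f r) (hfC : ∀ r, f r ≤ C) (hsupp : ∀ r, δ ≤ r → f r = 0)
    (g : Euc N → ℝ) (hg : Continuous g) :
    Integrable (fun h : Euc N => f ‖h‖ * g h) := by
  obtain ⟨K, hK⟩ := (isCompact_closedBall (0 : Euc N) δ).exists_bound_of_continuousOn hg.continuousOn
  have := (rho_integrable (N := N) f hfm C δ hf0 hfC hsupp).mul_const K
  refine this.mono' (by have := hg.measurable; fun_prop) (ae_of_all _ fun h => ?_)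
  by_cases hh : ‖h‖ < δ
  · rw [norm_mul, Real.norm_of_nonneg (hf0 _)]
    exact mul_le_mul_of_nonneg_left (hK h (by simpa using hh.le)) (hf0 _)
  · rw [hsupp _ (not_lt.1 hh)]; simp

lemma moment_quad {N : ℕ} (hN : 0 < N) (f : ℝ → ℝ) (hfm : Measurable f) (C δ : ℝ)
    (hf0 : ∀ r, 0 ≤ f r) (hfC : ∀ r, f r ≤ C) (hsupp : ∀ r, δ ≤ r → f r = 0)
    (a : Fin N → Fin N → ℝ) :
    ∫ h : Euc N, f ‖h‖ * ∑ i, ∑ j, a i j * (h i * h j) =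
      ((∫ h : Euc N, f ‖h‖ * ‖h‖ ^ 2) / N) * ∑ i, a i i := by
  have hI : ∀ i j : Fin N, Integrable (fun h : Euc N => f ‖h‖ * (h i * h j)) := fun i j =>
    rho_mul_integrable f hfm C δ hf0 hfC hsupp (fun h => h i * h j) (by fun_prop)
  have hd : ∀ i : Fin N, ∫ h : Euc N, f ‖h‖ * (h i * h i) =
      (∫ h : Euc N, f ‖h‖ * ‖h‖ ^ 2) / N := by
    intro i
    have : ∫ h : Euc N, f ‖h‖ * ‖h‖ ^ 2 = ∑ j : Fin N, ∫ h : Euc N, f ‖h‖ * (h j * h j) := by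
      rw [← integral_finsetSum _ (fun j _ => hI j j)]
      congr 1; ext h
      rw [EuclideanSpace.real_norm_sq_eq, Finset.mul_sum]
      refine Finset.sum_congr rfl fun j _ => by ring
    rw [this, Finset.sum_congr rfl (fun j _ => moment_swap f j i)]
    simp
    field_simp
  have : ∀ h : Euc N, f ‖h‖ * ∑ i, ∑ j, a i j * (h i * h j) =
      ∑ i, ∑ j, a i j * (f ‖h‖ * (h i * h j)) := by
    intro h
    simp only [Finset.mul_sum]
    refine Finset.sum_congr rfl fun i _ => Finset.sum_congr rfl fun j _ => by ring
  simp only [this]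
  rw [integral_finsetSum _ (fun i _ => integrable_finsetSum _ (fun j _ => (hI i j).const_mul _))]
  rw [Finset.mul_sum]
  refine Finset.sum_congr rfl fun i _ => ?_
  rw [integral_finsetSum _ (fun j _ => (hI i j).const_mul _)]
  rw [Finset.sum_eq_single i]
  · rw [integral_const_mul, hd]; ring
  · intro j _ hj
    rw [integral_const_mul, moment_off f i j hj.symm, mul_zero]
  · simp

/-- Riesz representation for a linear functional bounded through a linear map. -/
lemma riesz_factor {V H : Type*} [AddCommGroup V] [Module ℝ V] [NormedAddCommGroup H]
    [InnerProductSpace ℝ H] [CompleteSpace H] (ι : V →ₗ[ℝ] H) (ℓ : V →ₗ[ℝ] ℝ) (C : ℝ)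
    (hC : 0 ≤ C) (hb : ∀ v, |ℓ v| ≤ C * ‖ι v‖) :
    ∃ g : H, ‖g‖ ≤ C ∧ ∀ v, ℓ v = inner ℝ g (ι v) := by
  obtain ⟨r, hr⟩ := ι.rangeRestrict.exists_rightInverse_of_surjective ι.range_rangeRestrict
  have hr' : ∀ p : LinearMap.range ι, ι (r p) = p := fun p => by
    have := LinearMap.congr_fun hr p
    simpa using congrArg Subtype.val this
  let f : LinearMap.range ι →L[ℝ] ℝ := (ℓ ∘ₗ r).mkContinuous C (fun p => by
    have := hb (r p)
    rw [hr'] at this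
    simpa using this)
  obtain ⟨G, hG, hGn⟩ := exists_extension_norm_eq (LinearMap.range ι) f
  refine ⟨(InnerProductSpace.toDual ℝ H).symm G, ?_, fun v => ?_⟩
  · rw [LinearIsometryEquiv.norm_map, hGn]
    exact LinearMap.mkContinuous_norm_le _ hC _
  · rw [InnerProductSpace.toDual_symm_apply]
    have h1 := hG ⟨ι v, LinearMap.mem_range_self ι v⟩
    have h2 := hb (r ⟨ι v, LinearMap.mem_range_self ι v⟩ - v)
    rw [map_sub ι, hr', sub_self, norm_zero, mul_zero, map_sub] at h2
    have h3 := abs_nonpos_iff.1 h2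
    have h4 : G (ι v) = ℓ (r ⟨ι v, LinearMap.mem_range_self ι v⟩) := h1
    linarith

lemma gamma_ineq (n : ℕ) (hn : 1 ≤ n) :
    Real.Gamma ((n : ℝ) / 2) ≤ 2 * Real.sqrt Real.pi * Real.Gamma (((n : ℝ) + 1) / 2) := by
  have hpi : 1 ≤ Real.sqrt Real.pi := by
    rw [Real.one_le_sqrt]; linarith [Real.pi_gt_three]
  induction n using Nat.twoStepInduction with
  | zero => omega
  | one =>
    have : ((1 : ℕ) + 1 : ℝ) / 2 = 1 := by norm_num
    rw [this, Real.Gamma_one, Nat.cast_one, Real.Gamma_one_half_eq]; linarith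
  | more n ih _ =>
    rcases Nat.eq_zero_or_pos n with rfl | h0
    · have h1 : (((0 + 2 : ℕ) : ℝ)) / 2 = 1 := by norm_num
      have h2 : (((0 + 2 : ℕ) : ℝ) + 1) / 2 = 1 / 2 + 1 := by norm_num
      rw [h1, h2, Real.Gamma_one, Real.Gamma_add_one (by norm_num), Real.Gamma_one_half_eq]
      nlinarith
    · have ih' := ih h0
      have hnpos : (0 : ℝ) < n := by exact_mod_cast h0
      have h1 : (((n + 2 : ℕ) : ℝ)) / 2 = (n : ℝ) / 2 + 1 := by push_cast; ring
      have h2 : (((n + 2 : ℕ) : ℝ) + 1) / 2 = ((n : ℝ) + 1) / 2 + 1 := by push_cast; ring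
      rw [h1, h2, Real.Gamma_add_one (by positivity), Real.Gamma_add_one (by positivity)]
      have : 0 < Real.Gamma (((n : ℝ) + 1) / 2) := Real.Gamma_pos_of_pos (by positivity)
      have h3 : 0 ≤ 2 * Real.sqrt Real.pi * Real.Gamma (((n : ℝ) + 1) / 2) := by positivity
      nlinarith

lemma omega_ineq (N : ℕ) (hN : 2 ≤ N) :
    omegaPrev N / (2 * N) ≤ (volume.real (Metric.ball (0 : Euc N) 1)) / 2 := by
  obtain ⟨m, rfl⟩ : ∃ m, N = m + 2 := ⟨N - 2, by omega⟩
  have hm : m + 2 - 1 = m + 1 := by omega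
  have : Nonempty (Fin (m + 2 - 1)) := ⟨⟨0, by omega⟩⟩
  unfold omegaPrev Measure.real
  rw [EuclideanSpace.volume_ball, EuclideanSpace.volume_ball]
  simp only [Fintype.card_fin, ENNReal.ofReal_one, one_pow, one_mul, hm]
  have g1 : 0 < Real.Gamma (((m + 1 : ℕ) : ℝ) / 2 + 1) := Real.Gamma_pos_of_pos (by positivity)
  have g2 : 0 < Real.Gamma (((m + 2 : ℕ) : ℝ) / 2 + 1) := Real.Gamma_pos_of_pos (by positivity)
  rw [ENNReal.toReal_ofReal (by positivity), ENNReal.toReal_ofReal (by positivity)]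
  have key := gamma_ineq (m + 2) (by omega)
  have e1 : (((m + 1 : ℕ) : ℝ) / 2 + 1) = (((m + 2 : ℕ) : ℝ) + 1) / 2 := by push_cast; ring
  rw [e1] at g1 ⊢
  rw [Real.Gamma_add_one (by positivity)] at g2 ⊢
  set a := Real.Gamma ((((m + 2 : ℕ) : ℝ) + 1) / 2)
  set b := Real.Gamma (((m + 2 : ℕ) : ℝ) / 2)
  have hb : 0 < b := Real.Gamma_pos_of_pos (by positivity)
  have hp : 0 < Real.sqrt Real.pi := Real.sqrt_pos.2 Real.pi_pos
  rw [pow_succ _ (m+1)]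
  rw [div_div, div_div, div_le_div_iff₀ (by positivity) (by positivity)]
  have hq : 0 < Real.sqrt Real.pi ^ (m + 1) * ((m + 2 : ℕ) : ℝ) := by positivity
  nlinarith [mul_le_mul_of_nonneg_left key hq.le, mul_pos hq (mul_pos hp g1)]


/-- The divergence. -/
def dv {N : ℕ} (φ : Euc N → Euc N) (x : Euc N) : ℝ :=
  ∑ i, (fderiv ℝ φ x (EuclideanSpace.single i 1)) i

lemma inner_fderiv_expand {N : ℕ} (L : Euc N →L[ℝ] Euc N) (h : Euc N) :
    inner ℝ (L h) h = ∑ i, ∑ j, (L (EuclideanSpace.single i 1)) j * (h i * h j) := by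
  have hh : h = ∑ i, h i • (EuclideanSpace.single i (1 : ℝ) : Euc N) := by
    have := (EuclideanSpace.basisFun (Fin N) ℝ).sum_repr h
    simpa using this.symm
  conv_lhs => rw [hh]
  rw [map_sum, sum_inner]
  refine Finset.sum_congr rfl fun i _ => ?_
  rw [← hh, map_smul, real_inner_smul_left, PiLp.inner_apply, Finset.mul_sum]
  refine Finset.sum_congr rfl fun j _ => ?_
  simp
  ring

lemma inner_sq_expand {N : ℕ} (v h : Euc N) :
    (inner ℝ v h) ^ 2 = ∑ i, ∑ j, (v i * v j) * (h i * h j) := by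
  rw [PiLp.inner_apply, sq, Finset.sum_mul_sum]
  refine Finset.sum_congr rfl fun i _ => Finset.sum_congr rfl fun j _ => ?_
  simp
  ring

lemma key {N : ℕ} (hN : 0 < N) (f : ℝ → ℝ) (hfm : Measurable f) (C δ : ℝ)
    (hf0 : ∀ r, 0 ≤ f r) (hfC : ∀ r, f r ≤ C) (hsupp : ∀ r, δ ≤ r → f r = 0)
    (w : Euc N → ℝ) (hwm : Measurable w) (hwi : Integrable w)
    (φ : Euc N → Euc N) (hφ : ContDiff ℝ 1 φ) (hφc : HasCompactSupport φ)
    (L : ℝ) (hL : ∀ y h, ‖φ (y + h) - φ y - fderiv ℝ φ y h‖ ≤ L * ‖h‖ ^ 2)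
    (M : ℝ) (hM0 : 0 ≤ M)
    (hM : ∫⁻ p : Euc N × Euc N, ENNReal.ofReal
      (f ‖p.2‖ * (w p.1 - w (p.1 - p.2)) ^ 2 * (if φ p.1 = 0 then 0 else 1)) ≤ ENNReal.ofReal M) :
    2 * ((∫ h : Euc N, f ‖h‖ * ‖h‖ ^ 2) / N) * ∫ x, w x * dv φ x ≤
      M + ((∫ h : Euc N, f ‖h‖ * ‖h‖ ^ 2) / N) * (∫ x, ‖φ x‖ ^ 2) +
        2 * (L * (∫ h : Euc N, f ‖h‖ * ‖h‖ ^ 3) * ∫ x, |w x|) := by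
  set A := (∫ h : Euc N, f ‖h‖ * ‖h‖ ^ 2) / N with hA
  set B := ∫ h : Euc N, f ‖h‖ * ‖h‖ ^ 3 with hB
  have hφcont : Continuous φ := hφ.continuous
  have hφm : Measurable φ := hφcont.measurable
  obtain ⟨K, hK⟩ := hφcont.bounded_above_of_compact_support hφc
  have hK0 : 0 ≤ K := (norm_nonneg _).trans (hK 0)
  have hrm : Integrable (fun h : Euc N => f ‖h‖ * ‖h‖) :=
    rho_mul_integrable f hfm C δ hf0 hfC hsupp _ continuous_norm
  have hr2 : Integrable (fun h : Euc N => f ‖h‖ * ‖h‖ ^ 2) :=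
    rho_mul_integrable f hfm C δ hf0 hfC hsupp _ (by fun_prop)
  have hr3 : Integrable (fun h : Euc N => f ‖h‖ * ‖h‖ ^ 3) :=
    rho_mul_integrable f hfm C δ hf0 hfC hsupp _ (by fun_prop)
  -- generic integrability
  have hgen : ∀ b : Euc N → Euc N → Euc N, Measurable (Function.uncurry b) →
      (∀ x h, ‖b x h‖ ≤ K) →
      Integrable (fun p : Euc N × Euc N => f ‖p.2‖ * w p.1 * inner ℝ (b p.1 p.2) p.2) := by
    intro b hb hbK
    have h1 := (hwi.norm.mul_prod hrm).mul_const K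
    refine h1.mono' ?_ (ae_of_all _ fun p => ?_)
    · have hb' : Measurable (fun p : Euc N × Euc N => b p.1 p.2) := hb
      have : Measurable (fun p : Euc N × Euc N => f ‖p.2‖ * w p.1 * inner ℝ (b p.1 p.2) p.2) := by
        fun_prop
      exact this.aestronglyMeasurable
    · rw [norm_mul, norm_mul, Real.norm_of_nonneg (hf0 _)]
      have h2 : ‖(inner ℝ (b p.1 p.2) p.2 : ℝ)‖ ≤ K * ‖p.2‖ :=
        (norm_inner_le_norm _ _).trans (mul_le_mul_of_nonneg_right (hbK _ _) (norm_nonneg _))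
      calc f ‖p.2‖ * ‖w p.1‖ * ‖(inner ℝ (b p.1 p.2) p.2 : ℝ)‖
          ≤ f ‖p.2‖ * ‖w p.1‖ * (K * ‖p.2‖) :=
            mul_le_mul_of_nonneg_left h2 (mul_nonneg (hf0 _) (norm_nonneg _))
        _ = _ := by ring
  have hR := hgen (fun x _ => φ x) (by exact hφm.comp measurable_fst) (fun x _ => hK x)
  have hT := hgen (fun x h => φ (x + h)) (by exact hφm.comp (measurable_fst.add measurable_snd))
    (fun x h => hK _)
  set R := fun p : Euc N × Euc N => f ‖p.2‖ * w p.1 * inner ℝ (φ p.1) p.2 with hRdef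
  set T := fun p : Euc N × Euc N => f ‖p.2‖ * w p.1 * inner ℝ (φ (p.1 + p.2)) p.2 with hTdef
  set S := fun p : Euc N × Euc N => f ‖p.2‖ * w (p.1 - p.2) * inner ℝ (φ p.1) p.2 with hSdef
  have hmp : MeasurePreserving (fun z : Euc N × Euc N => (z.1 - z.2, z.2)) volume volume :=
    measurePreserving_sub_prod (volume : Measure (Euc N)) (volume : Measure (Euc N))
  have hST : S = T ∘ (fun z : Euc N × Euc N => (z.1 - z.2, z.2)) := by
    ext z; simp [S, T]
  have hSi : Integrable S := by
    rw [hST]; exact hmp.integrable_comp_of_integrable hT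
  have hSint : ∫ p, S p = ∫ p, T p := by
    rw [hST]
    have h1 := integral_map (μ := (volume : Measure (Euc N × Euc N)))
      hmp.measurable.aemeasurable (f := T) (by rw [hmp.map_eq]; exact hT.aestronglyMeasurable)
    rw [hmp.map_eq] at h1
    exact h1.symm
  -- odd part
  have hR0 : ∫ p, R p = 0 := by
    rw [show (volume : Measure (Euc N × Euc N)) = volume.prod volume from rfl,
      integral_prod _ hR]
    have : ∀ x, ∫ h, R (x, h) = 0 := by
      intro x
      have h1 : ∫ h, R (x, h) = ∫ h, R (x, -h) := (integral_neg_eq_self (fun h => R (x, h)) _).symm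
      have h2 : ∀ h, R (x, -h) = - R (x, h) := by
        intro h; simp [R]
      simp only [h2, integral_neg] at h1
      linarith
    simp [this]
  -- the lower bound
  have hgrad : ∀ y, ∫ h, f ‖h‖ * inner ℝ (fderiv ℝ φ y h) h = A * dv φ y := by
    intro y
    have := moment_quad hN f hfm C δ hf0 hfC hsupp
      (fun i j => (fderiv ℝ φ y (EuclideanSpace.single i 1)) j)
    simp only [← inner_fderiv_expand] at this
    exact this
  have hodd : ∀ y, ∫ h, f ‖h‖ * inner ℝ (φ y) h = 0 := by
    intro y
    have h1 : ∫ h, f ‖h‖ * inner ℝ (φ y) h = ∫ h, f ‖-h‖ * inner ℝ (φ y) (-h) :=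
      (integral_neg_eq_self (fun h => f ‖h‖ * inner ℝ (φ y) h) _).symm
    simp only [norm_neg, inner_neg_right, mul_neg, integral_neg] at h1
    linarith
  have hin : ∀ y, |(∫ h, f ‖h‖ * inner ℝ (φ (y + h)) h) - A * dv φ y| ≤ L * B := by
    intro y
    have i1 : Integrable (fun h => f ‖h‖ * inner ℝ (φ (y + h)) h) :=
      rho_mul_integrable f hfm C δ hf0 hfC hsupp _ (by fun_prop)
    have i2 : Integrable (fun h => f ‖h‖ * inner ℝ (φ y) h) :=
      rho_mul_integrable f hfm C δ hf0 hfC hsupp _ (by fun_prop)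
    have i3 : Integrable (fun h => f ‖h‖ * inner ℝ (fderiv ℝ φ y h) h) :=
      rho_mul_integrable f hfm C δ hf0 hfC hsupp _ (by fun_prop)
    have e : (∫ h, f ‖h‖ * inner ℝ (φ (y + h)) h) - A * dv φ y =
        ∫ h, f ‖h‖ * inner ℝ (φ (y + h) - φ y - fderiv ℝ φ y h) h := by
      have : ∀ h, f ‖h‖ * inner ℝ (φ (y + h) - φ y - fderiv ℝ φ y h) h =
          f ‖h‖ * inner ℝ (φ (y + h)) h - f ‖h‖ * inner ℝ (φ y) h -
            f ‖h‖ * inner ℝ (fderiv ℝ φ y h) h := by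
        intro h; rw [inner_sub_left, inner_sub_left]; ring
      simp only [this]
      rw [integral_sub (by exact i1.sub i2) i3, integral_sub i1 i2, hodd, hgrad]; ring
    rw [e, hB, ← integral_const_mul, ← Real.norm_eq_abs]
    refine norm_integral_le_of_norm_le (hr3.const_mul L) (ae_of_all _ fun h => ?_)
    rw [norm_mul, Real.norm_of_nonneg (hf0 _)]
    calc f ‖h‖ * ‖(inner ℝ (φ (y + h) - φ y - fderiv ℝ φ y h) h : ℝ)‖
        ≤ f ‖h‖ * (L * ‖h‖ ^ 2 * ‖h‖) := by
          refine mul_le_mul_of_nonneg_left ?_ (hf0 _)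
          exact (norm_inner_le_norm _ _).trans (mul_le_mul_of_nonneg_right (hL _ _) (norm_nonneg _))
      _ = _ := by ring
  have hdvc : Continuous (dv φ) := by
    unfold dv
    have := hφ.continuous_fderiv (by norm_num)
    fun_prop
  obtain ⟨D, hD⟩ : ∃ D, ∀ x, ‖dv φ x‖ ≤ D := by
    refine hdvc.bounded_above_of_compact_support ?_
    refine (hφc.fderiv (𝕜 := ℝ)).mono ?_
    intro x hx
    contrapose! hx
    have : fderiv ℝ φ x = 0 := by simpa using hx
    simp [dv, this]
  have hwd : Integrable (fun x => w x * dv φ x) := by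
    refine hwi.mul_bdd (c := D) hdvc.aestronglyMeasurable (ae_of_all _ hD)
  have hTe : ∫ p, T p = ∫ y, w y * ∫ h, f ‖h‖ * inner ℝ (φ (y + h)) h := by
    rw [show (volume : Measure (Euc N × Euc N)) = volume.prod volume from rfl,
      integral_prod _ hT]
    congr 1; ext y
    rw [← integral_const_mul]
    congr 1; ext h
    simp only [T]; ring
  have hTi : Integrable (fun y => w y * ∫ h, f ‖h‖ * inner ℝ (φ (y + h)) h) := by
    have := hT.integral_prod_left
    refine this.congr (ae_of_all _ fun y => ?_)
    simp only
    rw [← integral_const_mul]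
    congr 1; ext h
    simp only [T]; ring
  have hlow : A * (∫ x, w x * dv φ x) - L * B * ∫ x, |w x| ≤ ∫ p, T p := by
    rw [hTe, ← integral_const_mul, ← integral_const_mul, ← integral_sub (hwd.const_mul _)
      (hwi.abs.const_mul _)]
    refine integral_mono ((hwd.const_mul _).sub (hwi.abs.const_mul _)) hTi fun y => ?_
    simp only
    have h1 := hin y
    have h2 : |w y * ((∫ h, f ‖h‖ * inner ℝ (φ (y + h)) h) - A * dv φ y)| ≤ |w y| * (L * B) := by
      rw [abs_mul]; exact mul_le_mul_of_nonneg_left h1 (abs_nonneg _)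
    have h3 := (abs_le.1 h2).1
    linarith
  -- the upper bound
  set Q := fun p : Euc N × Euc N =>
    f ‖p.2‖ * (w p.1 - w (p.1 - p.2)) ^ 2 * (if φ p.1 = 0 then (0 : ℝ) else 1) with hQdef
  have hQ0 : ∀ p, 0 ≤ Q p := by
    intro p
    refine mul_nonneg (mul_nonneg (hf0 _) (sq_nonneg _)) ?_
    split_ifs <;> norm_num
  have hQm : Measurable Q := by
    have h1 : Measurable (fun x : Euc N => if φ x = 0 then (0 : ℝ) else 1) :=
      Measurable.ite (hφm (measurableSet_singleton 0)) measurable_const measurable_const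
    have h2 := h1.comp (measurable_fst : Measurable (Prod.fst : Euc N × Euc N → Euc N))
    refine Measurable.mul ?_ h2
    fun_prop
  have hQi : Integrable Q := by
    refine ⟨hQm.aestronglyMeasurable, ?_⟩
    rw [hasFiniteIntegral_iff_ofReal (ae_of_all _ hQ0)]
    exact hM.trans_lt ENNReal.ofReal_lt_top
  have hQM : ∫ p, Q p ≤ M := by
    rw [integral_eq_lintegral_of_nonneg_ae (ae_of_all _ hQ0) hQm.aestronglyMeasurable]
    exact ENNReal.toReal_le_of_le_ofReal hM0 hM
  set U := fun p : Euc N × Euc N => f ‖p.2‖ * (inner ℝ (φ p.1) p.2) ^ 2 with hUdef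
  have hφ2 : Integrable (fun x => ‖φ x‖ ^ 2) := by
    refine Continuous.integrable_of_hasCompactSupport (by fun_prop) ?_
    refine hφc.mono ?_
    intro x hx; contrapose! hx
    have : φ x = 0 := by simpa using hx
    simp [this]
  have hUi : Integrable U := by
    refine (hφ2.mul_prod hr2).mono' ?_ (ae_of_all _ fun p => ?_)
    · have : Measurable U := by simp only [U]; fun_prop
      exact this.aestronglyMeasurable
    · simp only [U]
      rw [norm_mul, Real.norm_of_nonneg (hf0 _), norm_pow]
      have h2 : ‖(inner ℝ (φ p.1) p.2 : ℝ)‖ ^ 2 ≤ (‖φ p.1‖ * ‖p.2‖) ^ 2 :=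
        pow_le_pow_left₀ (norm_nonneg _) (norm_inner_le_norm _ _) 2
      calc _ ≤ f ‖p.2‖ * (‖φ p.1‖ * ‖p.2‖) ^ 2 := mul_le_mul_of_nonneg_left h2 (hf0 _)
        _ = _ := by ring
  have hUe : ∫ p, U p = A * ∫ x, ‖φ x‖ ^ 2 := by
    rw [show (volume : Measure (Euc N × Euc N)) = volume.prod volume from rfl,
      integral_prod _ hUi, ← integral_const_mul]
    congr 1; ext x
    have := moment_quad hN f hfm C δ hf0 hfC hsupp (fun i j => φ x i * φ x j)
    simp only [← inner_sq_expand] at this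
    simp only [U]
    rw [this, EuclideanSpace.real_norm_sq_eq]
    congr 1
    exact Finset.sum_congr rfl fun i _ => by ring
  have hup : 2 * ((∫ p, S p) - ∫ p, R p) ≤ (∫ p, Q p) + ∫ p, U p := by
    rw [← integral_sub hSi hR, ← integral_const_mul, ← integral_add hQi hUi]
    refine integral_mono ((hSi.sub hR).const_mul 2) (hQi.add hUi) fun p => ?_
    simp only [S, R, Q, U]
    by_cases h0 : φ p.1 = 0
    · simp [h0]
    · simp only [h0, if_false, mul_one]
      have := hf0 ‖p.2‖
      nlinarith [mul_nonneg this (sq_nonneg ((w p.1 - w (p.1 - p.2)) + inner ℝ (φ p.1) p.2))]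
  rw [hSint, hR0, hUe] at hup
  linarith


/-- Truncated radial kernel. -/
def fk (N : ℕ) (s ε δ : ℝ) : ℝ → ℝ :=
  (Ioo ε δ).indicator (fun r => (1 - s) * r ^ (-((N : ℝ) + 2 * s)))

lemma fk_measurable (N : ℕ) (s ε δ : ℝ) : Measurable (fk N s ε δ) := by
  unfold fk
  exact Measurable.indicator (by fun_prop) measurableSet_Ioo

lemma fk_nonneg (N : ℕ) (s ε δ : ℝ) (hs1 : s < 1) (hε : 0 < ε) (r : ℝ) :
    0 ≤ fk N s ε δ r := by
  unfold fk
  refine indicator_nonneg (fun r hr => ?_) r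
  have : 0 < r := hε.trans hr.1
  have : 0 ≤ 1 - s := by linarith
  positivity

lemma fk_le (N : ℕ) (s ε δ : ℝ) (hs0 : 0 < s) (hs1 : s < 1) (hε : 0 < ε) (r : ℝ) :
    fk N s ε δ r ≤ (1 - s) * ε ^ (-((N : ℝ) + 2 * s)) := by
  unfold fk
  have h1 : 0 ≤ 1 - s := by linarith
  refine indicator_apply_le' (fun hr => ?_) (fun hr => by positivity)
  refine mul_le_mul_of_nonneg_left ?_ h1
  exact Real.rpow_le_rpow_of_nonpos hε hr.1.le (by have : (0:ℝ) ≤ N := by positivity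
                                                   linarith)

lemma fk_supp (N : ℕ) (s ε δ : ℝ) (r : ℝ) (hr : δ ≤ r) : fk N s ε δ r = 0 := by
  unfold fk
  exact indicator_of_notMem (fun h => absurd h.2 (not_lt.2 hr)) _

lemma fk_moment (N : ℕ) (hN : 0 < N) (s ε δ : ℝ) (hε : 0 < ε) (hεδ : ε ≤ δ) (m : ℕ) :
    ∫ h : Euc N, fk N s ε δ ‖h‖ * ‖h‖ ^ (m + 1) =
      N * (volume.real (Metric.ball (0 : Euc N) 1)) *
        ((1 - s) * ∫ r in ε..δ, r ^ ((m : ℝ) - 2 * s)) := by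
  have : Nonempty (Fin N) := ⟨⟨0, hN⟩⟩
  rw [integral_fun_norm_addHaar volume (fun r => fk N s ε δ r * r ^ (m + 1))]
  simp only [finrank_euclideanSpace, Fintype.card_fin, nsmul_eq_mul, smul_eq_mul]
  rw [mul_assoc]
  congr 2
  rw [intervalIntegral.integral_of_le hεδ, integral_Ioc_eq_integral_Ioo, ← integral_const_mul,
    ← integral_indicator measurableSet_Ioo, ← integral_indicator measurableSet_Ioi]
  congr 1; ext r
  by_cases hr : r ∈ Ioo ε δ
  · have hr0 : 0 < r := hε.trans hr.1
    rw [indicator_of_mem hr, indicator_of_mem (show r ∈ Ioi (0:ℝ) from hr0), fk, indicator_of_mem hr]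
    have e : r ^ ((m : ℝ) - 2 * s) =
        r ^ (-((N : ℝ) + 2 * s)) * (r ^ (N - 1) * r ^ (m + 1)) := by
      rw [← Real.rpow_natCast, ← Real.rpow_natCast, ← Real.rpow_add hr0, ← Real.rpow_add hr0]
      congr 1
      rw [Nat.cast_sub (by omega)]; push_cast; ring
    rw [e]; ring
  · rw [indicator_of_notMem hr]
    rw [fk]
    simp only [indicator_apply, if_neg hr, zero_mul, mul_zero, ite_self]

lemma fk_A (N : ℕ) (hN : 0 < N) (s ε δ : ℝ) (hs1 : s < 1) (hε : 0 < ε) (hεδ : ε ≤ δ) :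
    (∫ h : Euc N, fk N s ε δ ‖h‖ * ‖h‖ ^ 2) / N =
      volume.real (Metric.ball (0 : Euc N) 1) / 2 * (δ ^ (2 - 2 * s) - ε ^ (2 - 2 * s)) := by
  rw [fk_moment N hN s ε δ hε hεδ 1, integral_rpow (Or.inl (by push_cast; linarith))]
  have h1 : (1 : ℝ) - s ≠ 0 := by linarith
  have h2 : (((1 : ℕ) : ℝ) - 2 * s + 1) = 2 - 2 * s := by push_cast; ring
  rw [h2]
  have h3 : (2 : ℝ) - 2 * s = 2 * (1 - s) := by ring
  have hN' : (N : ℝ) ≠ 0 := by positivity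
  have h4 : (2 : ℝ) - 2 * s ≠ 0 := by rw [h3]; positivity
  generalize δ ^ (2 - 2 * s) - ε ^ (2 - 2 * s) = X
  rw [h3]
  field_simp

lemma fk_B (N : ℕ) (hN : 0 < N) (s ε δ : ℝ) (hs1 : s < 1) (hε : 0 < ε) (hεδ : ε ≤ δ)
    (hδ : δ ≤ 1) :
    (∫ h : Euc N, fk N s ε δ ‖h‖ * ‖h‖ ^ 3) ≤
      N * volume.real (Metric.ball (0 : Euc N) 1) * (1 - s) := by
  rw [fk_moment N hN s ε δ hε hεδ 2]
  have h1 : ∫ r in ε..δ, r ^ (((2 : ℕ) : ℝ) - 2 * s) ≤ ∫ r in ε..δ, (1 : ℝ) := by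
    refine intervalIntegral.integral_mono_on hεδ ?_ (by simp) ?_
    · exact intervalIntegral.intervalIntegrable_rpow' (by push_cast; linarith)
    · intro r hr
      exact Real.rpow_le_one (hε.le.trans hr.1) (hr.2.trans hδ) (by push_cast; linarith)
  rw [intervalIntegral.integral_const, smul_eq_mul, mul_one] at h1
  have h2 : ∫ r in ε..δ, r ^ (((2 : ℕ) : ℝ) - 2 * s) ≤ 1 := by linarith
  have h3 : 0 ≤ 1 - s := by linarith
  have : (1 - s) * ∫ r in ε..δ, r ^ (((2 : ℕ) : ℝ) - 2 * s) ≤ 1 - s := by nlinarith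
  exact mul_le_mul_of_nonneg_left this (by positivity)

/-- Second order Taylor bound. -/
lemma taylor_bound {N : ℕ} (φ : Euc N → Euc N) (hφ : ContDiff ℝ 2 φ)
    (hφc : HasCompactSupport φ) :
    ∃ L : ℝ, 0 ≤ L ∧ ∀ y h, ‖φ (y + h) - φ y - fderiv ℝ φ y h‖ ≤ L * ‖h‖ ^ 2 := by
  have h1 : ContDiff ℝ 1 (fderiv ℝ φ) := hφ.fderiv_right (by norm_num)
  obtain ⟨L, hL⟩ := ContDiff.lipschitzWith_of_hasCompactSupport (𝕂 := ℝ)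
    (hφc.fderiv (𝕜 := ℝ)) h1 (by norm_num)
  refine ⟨L, L.2, fun y h => ?_⟩
  have hd : ∀ x ∈ Metric.closedBall y ‖h‖,
      HasFDerivWithinAt φ (fderiv ℝ φ x) (Metric.closedBall y ‖h‖) x := fun x _ =>
    ((hφ.differentiable (by norm_num)) x).hasFDerivAt.hasFDerivWithinAt
  have hb : ∀ x ∈ Metric.closedBall y ‖h‖, ‖fderiv ℝ φ x - fderiv ℝ φ y‖ ≤ L * ‖h‖ := by
    intro x hx
    have := hL.dist_le_mul x y
    rw [dist_eq_norm] at this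
    exact this.trans (mul_le_mul_of_nonneg_left (by simpa using hx) L.2)
  have := (convex_closedBall y ‖h‖).norm_image_sub_le_of_norm_hasFDerivWithin_le' hd hb
    (x := y) (y := y + h) (by simp) (by simp)
  simpa [mul_assoc, sq] using this

/-- Test vector fields. -/
def testV (N : ℕ) (Ω : Set (Euc N)) : Submodule ℝ (Euc N → Euc N) where
  carrier := {φ | ContDiff ℝ (⊤ : ℕ∞) φ ∧ HasCompactSupport φ ∧ tsupport φ ⊆ Ω}
  zero_mem' := ⟨contDiff_const, HasCompactSupport.zero, by simp [tsupport]⟩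
  add_mem' := fun {a b} ha hb => ⟨ha.1.add hb.1, ha.2.1.add hb.2.1,
    (tsupport_add a b).trans (union_subset ha.2.2 hb.2.2)⟩
  smul_mem' := fun c a ha => ⟨contDiff_const.smul ha.1, ha.2.1.smul_left (f := fun _ => c),
    (tsupport_smul_subset_right (fun _ => c) a).trans ha.2.2⟩

lemma dv_continuous {N : ℕ} {φ : Euc N → Euc N} (hφ : ContDiff ℝ 1 φ) : Continuous (dv φ) := by
  unfold dv
  have := hφ.continuous_fderiv (by norm_num)
  fun_prop

lemma dv_bounded {N : ℕ} {φ : Euc N → Euc N} (hφ : ContDiff ℝ 1 φ) (hφc : HasCompactSupport φ) :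
    ∃ D, ∀ x, ‖dv φ x‖ ≤ D := by
  refine (dv_continuous hφ).bounded_above_of_compact_support ?_
  refine (hφc.fderiv (𝕜 := ℝ)).mono ?_
  intro x hx
  contrapose! hx
  have : fderiv ℝ φ x = 0 := by simpa using hx
  simp [dv, this]

/-- A bounded divergence functional gives a weak gradient. -/
lemma weak_grad {N : ℕ} (Ω : Set (Euc N)) (u : Euc N → ℝ)
    (hui : IntegrableOn u Ω) (M K : ℝ) (hM : 0 ≤ M) (hK : 0 < K)
    (hb : ∀ φ ∈ testV N Ω, 2 * K * ∫ x in Ω, u x * dv φ x ≤ M + K * ∫ x, ‖φ x‖ ^ 2) :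
    gradSq N Ω u ≤ ENNReal.ofReal (M / K) := by
  have hC1 : ∀ φ : testV N Ω, ContDiff ℝ 1 (φ : Euc N → Euc N) := fun φ =>
    φ.2.1.of_le (by exact_mod_cast le_top)
  have hmem : ∀ φ : testV N Ω, MemLp (φ : Euc N → Euc N) 2 (volume.restrict Ω) := fun φ =>
    (φ.2.1.continuous.memLp_of_hasCompactSupport φ.2.2.1).restrict Ω
  let ι : testV N Ω →ₗ[ℝ] Lp (Euc N) 2 (volume.restrict Ω) :=
    { toFun := fun φ => (hmem φ).toLp _
      map_add' := fun a b => MemLp.toLp_add (hmem a) (hmem b)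
      map_smul' := fun c a => MemLp.toLp_const_smul c (hmem a) }
  have hintg : ∀ φ : testV N Ω, IntegrableOn (fun x => u x * dv (φ : Euc N → Euc N) x) Ω := by
    intro φ
    obtain ⟨D, hD⟩ := dv_bounded (hC1 φ) φ.2.2.1
    exact hui.mul_bdd (c := D) (dv_continuous (hC1 φ)).aestronglyMeasurable (ae_of_all _ hD)
  let ℓ : testV N Ω →ₗ[ℝ] ℝ :=
    { toFun := fun φ => ∫ x in Ω, u x * dv (φ : Euc N → Euc N) x
      map_add' := fun a b => by
        rw [← integral_add (hintg a) (hintg b)]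
        congr 1; ext x
        have : dv ((a + b : testV N Ω) : Euc N → Euc N) x = dv (a : Euc N → Euc N) x +
            dv (b : Euc N → Euc N) x := by
          unfold dv
          rw [← Finset.sum_add_distrib]
          refine Finset.sum_congr rfl fun i _ => ?_
          rw [Submodule.coe_add, fderiv_add ((hC1 a).differentiable (by norm_num) x)
            ((hC1 b).differentiable (by norm_num) x)]
          simp
        rw [this]; ring
      map_smul' := fun c a => by
        rw [RingHom.id_apply, smul_eq_mul, ← integral_const_mul]
        congr 1; ext x
        have : dv ((c • a : testV N Ω) : Euc N → Euc N) x = c * dv (a : Euc N → Euc N) x := by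
          unfold dv
          rw [Finset.mul_sum]
          refine Finset.sum_congr rfl fun i _ => ?_
          rw [Submodule.coe_smul, fderiv_const_smul ((hC1 a).differentiable (by norm_num) x)]
          simp
        rw [this]; ring }
  have hnorm : ∀ φ : testV N Ω, ∫ x, ‖(φ : Euc N → Euc N) x‖ ^ 2 = ‖ι φ‖ ^ 2 := by
    intro φ
    rw [← real_inner_self_eq_norm_sq, L2.inner_def]
    rw [← setIntegral_eq_integral_of_forall_compl_eq_zero (s := Ω)]
    · refine integral_congr_ae ?_
      filter_upwards [(hmem φ).coeFn_toLp] with x hx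
      simp only [ι, LinearMap.coe_mk, AddHom.coe_mk]
      rw [hx, real_inner_self_eq_norm_sq]
    · intro x hx
      have : (φ : Euc N → Euc N) x = 0 := by
        by_contra h
        exact hx (φ.2.2.2 (subset_tsupport _ h))
      simp [this]
  have hquad : ∀ φ : testV N Ω, 2 * K * ℓ φ ≤ M + K * ‖ι φ‖ ^ 2 := by
    intro φ
    have := hb φ φ.2
    rw [hnorm] at this
    exact this
  have hbd : ∀ φ : testV N Ω, |ℓ φ| ≤ Real.sqrt (M / K) * ‖ι φ‖ := by
    intro φ
    rw [← Real.sqrt_sq (norm_nonneg (ι φ)), ← Real.sqrt_mul (by positivity)]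
    apply Real.abs_le_sqrt
    have hq : ∀ t : ℝ, 0 ≤ K * ‖ι φ‖ ^ 2 * (t * t) + (-(2 * K * ℓ φ)) * t + M := by
      intro t
      have := hquad (t • φ)
      rw [map_smul, map_smul, norm_smul, mul_pow, smul_eq_mul, Real.norm_eq_abs, sq_abs] at this
      nlinarith
    have := discrim_le_zero hq
    unfold discrim at this
    rw [div_mul_eq_mul_div, le_div_iff₀ hK]
    have h4 : 4 * K * ((ℓ φ) ^ 2 * K - M * ‖ι φ‖ ^ 2) ≤ 0 := by nlinarith
    have : (ℓ φ) ^ 2 * K - M * ‖ι φ‖ ^ 2 ≤ 0 := by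
      by_contra hc
      push Not at hc
      have := mul_pos (show 0 < 4 * K by linarith) hc
      linarith
    linarith
  obtain ⟨G, hGn, hG⟩ := riesz_factor ι ℓ _ (Real.sqrt_nonneg _) hbd
  have hGm : Measurable (fun x => -(G x)) := (Lp.stronglyMeasurable G).measurable.neg
  have hGint : ∫⁻ x in Ω, ENNReal.ofReal (‖-(G x)‖ ^ 2) = ENNReal.ofReal (‖G‖ ^ 2) := by
    rw [← real_inner_self_eq_norm_sq, L2.inner_def,
      ofReal_integral_eq_lintegral_ofReal (L2.integrable_inner G G)
        (ae_of_all _ fun x => real_inner_self_nonneg)]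
    refine lintegral_congr fun x => ?_
    rw [norm_neg, real_inner_self_eq_norm_sq]
  have hle : ENNReal.ofReal (‖G‖ ^ 2) ≤ ENNReal.ofReal (M / K) := by
    apply ENNReal.ofReal_le_ofReal
    rw [← Real.sq_sqrt (show 0 ≤ M / K by positivity)]
    exact pow_le_pow_left₀ (norm_nonneg _) hGn 2
  unfold gradSq
  refine (iInf₂_le (fun x => -(G x)) ⟨hGm, ?_, ?_⟩).trans (hGint.le.trans hle)
  · rw [hGint]; exact ENNReal.ofReal_lt_top
  · intro ψ hψ hψc hψs i
    let φ : testV N Ω := ⟨fun x => ψ x • (EuclideanSpace.single i (1 : ℝ) : Euc N),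
      hψ.smul contDiff_const, hψc.smul_right, (tsupport_smul_subset_left ψ _).trans hψs⟩
    have h1 := hG φ
    rw [L2.inner_def] at h1
    have h2 : ℓ φ = ∫ x in Ω, u x * fderiv ℝ ψ x (EuclideanSpace.single i 1) := by
      change ∫ x in Ω, u x * dv (φ : Euc N → Euc N) x = _
      congr 1; ext x
      congr 1
      unfold dv
      have hd : fderiv ℝ (φ : Euc N → Euc N) x =
          (fderiv ℝ ψ x).smulRight (EuclideanSpace.single i (1 : ℝ) : Euc N) := by
        have := ((hψ.differentiable (by simp)) x).hasFDerivAt.smul_const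
          (EuclideanSpace.single i (1 : ℝ) : Euc N)
        exact this.fderiv
      rw [hd, Finset.sum_eq_single i]
      · simp
      · intro j _ hj; simp [hj]
      · simp
    rw [← h2, h1, ← integral_neg]
    refine integral_congr_ae ?_
    filter_upwards [(hmem φ).coeFn_toLp] with x hx
    simp only [ι, LinearMap.coe_mk, AddHom.coe_mk]
    rw [hx]
    simp only [φ, real_inner_smul_right, EuclideanSpace.inner_single_right]
    simp
    ring


lemma energy_bound {N : ℕ} (s ε δ : ℝ) (hs1 : s < 1) (hε : 0 < ε)
    (Ω : Set (Euc N)) (v : Euc N → ℝ) (hv : Measurable v) (φ : Euc N → Euc N)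
    (hδ : Metric.thickening δ (tsupport φ) ⊆ Ω) :
    ∫⁻ p : Euc N × Euc N, ENNReal.ofReal
      (fk N s ε δ ‖p.2‖ * (Ω.indicator v p.1 - Ω.indicator v (p.1 - p.2)) ^ 2 *
        (if φ p.1 = 0 then 0 else 1)) ≤ ENNReal.ofReal (1 - s) * semiSq N s Ω v := by
  have hreg : MeasurableSet (reg N Ω) := by
    have : reg N Ω = (Prod.fst ⁻¹' closure Ω) ∪ (Prod.snd ⁻¹' closure Ω) := rfl
    rw [this]
    exact (measurable_fst isClosed_closure.measurableSet).union
      (measurable_snd isClosed_closure.measurableSet)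
  set G : Euc N × Euc N → ℝ≥0∞ := (reg N Ω).indicator
    (fun q => ENNReal.ofReal ((v q.1 - v q.2) ^ 2 / kern N s q.1 q.2)) with hG
  have hGm : Measurable G := by
    refine Measurable.indicator ?_ hreg
    unfold kern
    fun_prop
  have hpt : ∀ p : Euc N × Euc N, ENNReal.ofReal
      (fk N s ε δ ‖p.2‖ * (Ω.indicator v p.1 - Ω.indicator v (p.1 - p.2)) ^ 2 *
        (if φ p.1 = 0 then 0 else 1)) ≤ ENNReal.ofReal (1 - s) * G (p.1, p.1 - p.2) := by
    rintro ⟨x, h⟩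
    simp only
    by_cases h0 : φ x = 0
    · simp [h0]
    by_cases hh : ‖h‖ ∈ Ioo ε δ
    · have hpos : 0 < δ := hε.trans (hh.1.trans hh.2)
      have hx : x ∈ tsupport φ := subset_tsupport _ h0
      have hxΩ : x ∈ Ω := hδ (Metric.self_subset_thickening hpos _ hx)
      have hyΩ : x - h ∈ Ω := hδ (by
        rw [Metric.mem_thickening_iff]
        exact ⟨x, hx, by simpa [dist_eq_norm] using hh.2⟩)
      have hr : (x, x - h) ∈ reg N Ω := Or.inl (subset_closure hxΩ)
      rw [hG, indicator_of_mem hr, indicator_of_mem hxΩ, indicator_of_mem hyΩ,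
        ← ENNReal.ofReal_mul (by linarith)]
      apply ENNReal.ofReal_le_ofReal
      simp only [h0, if_false, mul_one, fk, kern]
      rw [indicator_of_mem hh, sub_sub_cancel, Real.rpow_neg (norm_nonneg _)]
      apply le_of_eq
      rw [div_eq_mul_inv]; ring
    · simp [fk, indicator_of_notMem hh]
  calc _ ≤ ∫⁻ p : Euc N × Euc N, ENNReal.ofReal (1 - s) * G (p.1, p.1 - p.2) :=
        lintegral_mono hpt
    _ = ENNReal.ofReal (1 - s) * ∫⁻ p : Euc N × Euc N, G (p.1, p.1 - p.2) := by
        rw [lintegral_const_mul]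
        fun_prop
    _ = ENNReal.ofReal (1 - s) * ∫⁻ p : Euc N × Euc N, G p := by
        congr 1
        rw [show (volume : Measure (Euc N × Euc N)) = volume.prod volume from rfl,
          lintegral_prod _ (by fun_prop), lintegral_prod _ hGm.aemeasurable]
        refine lintegral_congr fun x => ?_
        exact lintegral_sub_left_eq_self (fun y => G (x, y)) x
    _ = _ := by
        rw [hG, lintegral_indicator hreg]; rfl

lemma l2_integrable {N : ℕ} {Ω : Set (Euc N)} {u : Euc N → ℝ} (hm : Measurable u)
    (h : l2sq N Ω u < ⊤) : MemLp u 2 (volume.restrict Ω) := by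
  rw [memLp_two_iff_integrable_sq hm.aestronglyMeasurable]
  refine ⟨by fun_prop, ?_⟩
  rw [hasFiniteIntegral_iff_ofReal (ae_of_all _ fun x => sq_nonneg _)]
  exact h

lemma l1_le_l2 {α : Type*} [MeasurableSpace α] (μ : Measure α) [IsFiniteMeasure μ] (d : α → ℝ)
    (hd : MemLp d 2 μ) : ∫ x, |d x| ∂μ ≤ Real.sqrt (μ.real univ * ∫ x, (d x) ^ 2 ∂μ) := by
  have hi : Integrable d μ := hd.integrable (by norm_num)
  have hs : Integrable (fun x => (d x) ^ 2) μ := hd.integrable_sq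
  apply Real.le_sqrt_of_sq_le
  have hq : ∀ t : ℝ, 0 ≤ μ.real univ * (t * t) + (-(2 * ∫ x, |d x| ∂μ)) * t +
      ∫ x, (d x) ^ 2 ∂μ := by
    intro t
    have h0 : 0 ≤ ∫ x, (t - |d x|) ^ 2 ∂μ := integral_nonneg fun x => sq_nonneg _
    have e : ∀ x, (t - |d x|) ^ 2 = (t * t - (2 * t) * |d x|) + (d x) ^ 2 := by
      intro x; rw [← sq_abs (d x)]; ring
    simp only [e] at h0
    have i1 : Integrable (fun x => t * t - (2 * t) * |d x|) μ :=
      (integrable_const _).sub (hi.abs.const_mul _)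
    rw [integral_add i1 hs, integral_sub (integrable_const _) (hi.abs.const_mul _),
      integral_const_mul (2 * t), integral_const, smul_eq_mul] at h0
    linarith
  have := discrim_le_zero hq
  unfold discrim at this
  nlinarith

/-- Proposition 3.4, Γ-liminf inequality: for every `u ∈ L²₀(Ω)` and every
sequence `u_k → u` in `L²(Ω)` with `s_k ↗ 1`, one has `F₁(u) ≤ liminf_k F_{s_k}(u_k)`. -/
theorem statement11 (N : ℕ) (hN : 2 ≤ N) (Ω : Set (Euc N)) (hΩ : IsLipschitzDomain N Ω)
    (u : Euc N → ℝ) (hu : memL20 N Ω u)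
    (sk : ℕ → ℝ) (hmono : StrictMono sk) (hsk : ∀ k, sk k ∈ Set.Ioo (0 : ℝ) 1)
    (hsk1 : Filter.Tendsto sk Filter.atTop (nhds 1))
    (uk : ℕ → Euc N → ℝ) (huk : ∀ k, memL20 N Ω (uk k))
    (hconv : Filter.Tendsto (fun k => ∫ x in Ω, (uk k x - u x) ^ 2)
      Filter.atTop (nhds 0)) :
    F1 N Ω u ≤ Filter.liminf (fun k => Fs N (sk k) Ω (uk k)) Filter.atTop := by
  have hN0 : 0 < N := by omega
  obtain ⟨hΩo, hΩb, -, -⟩ := hΩ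
  have hfin : IsFiniteMeasure (volume.restrict Ω) := ⟨by
    rw [Measure.restrict_apply_univ]; exact hΩb.measure_lt_top⟩
  have hu2 : MemLp u 2 (volume.restrict Ω) := l2_integrable hu.1 hu.2.1
  have hui : IntegrableOn u Ω := hu2.integrable (by norm_num)
  have huk2 : ∀ k, MemLp (uk k) 2 (volume.restrict Ω) := fun k => l2_integrable (huk k).1 (huk k).2.1
  have huki : ∀ k, IntegrableOn (uk k) Ω := fun k => (huk2 k).integrable (by norm_num)
  set K := volume.real (Metric.ball (0 : Euc N) 1) / 2 with hKdef
  have hK : 0 < K := by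
    have : 0 < volume.real (Metric.ball (0 : Euc N) 1) :=
      ENNReal.toReal_pos (Metric.measure_ball_pos _ _ one_pos).ne' measure_ball_lt_top.ne
    positivity
  -- L¹ convergence
  have hd1 : Tendsto (fun k => ∫ x in Ω, |uk k x - u x|) atTop (𝓝 0) := by
    have h1 : Tendsto (fun k => Real.sqrt ((volume.restrict Ω).real univ *
        ∫ x in Ω, (uk k x - u x) ^ 2)) atTop (𝓝 0) := by
      have := (hconv.const_mul ((volume.restrict Ω).real univ)).sqrt
      simpa using this
    refine squeeze_zero (fun k => integral_nonneg fun x => abs_nonneg _) (fun k => ?_) h1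
    exact l1_le_l2 _ _ ((huk2 k).sub hu2)
  have habs : Tendsto (fun k => ∫ x in Ω, |uk k x|) atTop (𝓝 (∫ x in Ω, |u x|)) := by
    rw [tendsto_iff_dist_tendsto_zero]
    refine squeeze_zero (fun k => dist_nonneg) (fun k => ?_) hd1
    rw [Real.dist_eq, ← integral_sub (huki k).abs hui.abs, ← Real.norm_eq_abs]
    refine norm_integral_le_of_norm_le ((huki k).sub hui).abs (ae_of_all _ fun x => ?_)
    exact abs_abs_sub_abs_le _ _
  -- powers
  have ha : Tendsto (fun k => 1 - sk k) atTop (𝓝 0) := by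
    have := hsk1.const_sub 1
    simpa using this
  have ha0 : ∀ k, 0 < 1 - sk k := fun k => by linarith [(hsk k).2]
  have ha' : Tendsto (fun k => 1 - sk k) atTop (𝓝[>] 0) :=
    tendsto_nhdsWithin_iff.2 ⟨ha, Eventually.of_forall ha0⟩
  have hinv : Tendsto (fun k => (1 - sk k)⁻¹) atTop atTop := tendsto_inv_nhdsGT_zero.comp ha'
  have hexp : Tendsto (fun k => Real.exp (-(2 * (1 - sk k)⁻¹))) atTop (𝓝 0) :=
    Real.tendsto_exp_neg_atTop_nhds_zero.comp (hinv.const_mul_atTop (by norm_num : (0:ℝ) < 2))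
  by_contra hcon
  push Not at hcon
  obtain ⟨M, hM1, hM2⟩ := ENNReal.lt_iff_exists_nnreal_btwn.1 hcon
  have hfreq : ∃ᶠ k in atTop, Fs N (sk k) Ω (uk k) < M := frequently_lt_of_liminf_lt (by isBoundedDefault) hM1
  have hmain : ∀ φ ∈ testV N Ω,
      2 * K * ∫ x in Ω, u x * dv φ x ≤ (M : ℝ) + K * ∫ x, ‖φ x‖ ^ 2 := by
    intro φ hφ
    have hφ1 : ContDiff ℝ 1 φ := hφ.1.of_le (by exact_mod_cast le_top)
    have hφ2 : ContDiff ℝ 2 φ := contDiff_infty.1 hφ.1 2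
    obtain ⟨L, hL0, hL⟩ := taylor_bound φ hφ2 hφ.2.1
    obtain ⟨D, hD⟩ := dv_bounded hφ1 hφ.2.1
    obtain ⟨δ₀, hδ₀, hδ₀s⟩ := IsCompact.exists_thickening_subset_open hφ.2.1.isCompact hΩo hφ.2.2
    set δ := min δ₀ 1 with hδdef
    have hδ : 0 < δ := lt_min hδ₀ one_pos
    have hδ1 : δ ≤ 1 := min_le_right _ _
    have hδs : Metric.thickening δ (tsupport φ) ⊆ Ω :=
      (Metric.thickening_mono (min_le_left _ _) _).trans hδ₀s
    set ε : ℕ → ℝ := fun k => δ * Real.exp (-(((1 - sk k)⁻¹) ^ 2)) with hε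
    have hε0 : ∀ k, 0 < ε k := fun k => by positivity
    have hεδ : ∀ k, ε k ≤ δ := fun k => by
      have : Real.exp (-(((1 - sk k)⁻¹) ^ 2)) ≤ 1 := Real.exp_le_one_iff.2 (by
        have := sq_nonneg ((1 - sk k)⁻¹); linarith)
      calc ε k ≤ δ * 1 := mul_le_mul_of_nonneg_left this hδ.le
        _ = δ := mul_one _
    set A : ℕ → ℝ := fun k => K * (δ ^ (2 - 2 * sk k) - ε k ^ (2 - 2 * sk k)) with hA
    have hδp : Tendsto (fun k => δ ^ (2 - 2 * sk k)) atTop (𝓝 1) := by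
      have h1 : Tendsto (fun k => 2 - 2 * sk k) atTop (𝓝 0) := by
        have := ha.const_mul 2
        simp only [mul_zero] at this
        refine this.congr fun k => by ring
      have := (Real.continuousAt_const_rpow (a := δ) (b := 0) hδ.ne').tendsto.comp h1
      rw [Real.rpow_zero] at this
      exact this
    have hεp : Tendsto (fun k => ε k ^ (2 - 2 * sk k)) atTop (𝓝 0) := by
      have := hδp.mul hexp
      simp only [mul_zero] at this
      refine this.congr fun k => ?_
      simp only [hε]
      rw [Real.mul_rpow hδ.le (Real.exp_pos _).le, ← Real.exp_mul]
      congr 2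
      have := (ha0 k).ne'
      field_simp
    have hAt : Tendsto A atTop (𝓝 K) := by
      have := (hδp.sub hεp).const_mul K
      simpa using this
    have hIt : Tendsto (fun k => ∫ x in Ω, uk k x * dv φ x) atTop
        (𝓝 (∫ x in Ω, u x * dv φ x)) := by
      have hi : ∀ g : Euc N → ℝ, IntegrableOn g Ω → IntegrableOn (fun x => g x * dv φ x) Ω :=
        fun g hg => hg.mul_bdd (c := D) (dv_continuous hφ1).aestronglyMeasurable (ae_of_all _ hD)
      rw [tendsto_iff_dist_tendsto_zero]
      have h1 := hd1.mul_const D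
      rw [zero_mul] at h1
      refine squeeze_zero (fun k => dist_nonneg) (fun k => ?_) h1
      rw [Real.dist_eq, ← integral_sub (hi _ (huki k)) (hi _ hui), ← Real.norm_eq_abs,
        ← integral_mul_const]
      refine norm_integral_le_of_norm_le (((huki k).sub hui).abs.mul_const D)
        (ae_of_all _ fun x => ?_)
      rw [← sub_mul, norm_mul]
      exact mul_le_mul_of_nonneg_left (hD x) (norm_nonneg _)
    have hineq : ∃ᶠ k in atTop, 2 * A k * ∫ x in Ω, uk k x * dv φ x ≤
        (M : ℝ) + A k * (∫ x, ‖φ x‖ ^ 2) +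
          2 * (L * (N * volume.real (Metric.ball (0 : Euc N) 1) * (1 - sk k)) *
            ∫ x in Ω, |uk k x|) := by
      refine hfreq.mono fun k hk => ?_
      obtain ⟨v, ⟨⟨hvm, hv2, -⟩, hvu⟩, hvM⟩ : ∃ v : Euc N → ℝ,
          (memHs N (sk k) Ω v ∧ v =ᵐ[volume.restrict Ω] uk k) ∧
            ENNReal.ofReal (1 - sk k) * semiSq N (sk k) Ω v < M := by
        have hpos : ENNReal.ofReal (1 - sk k) ≠ 0 := by
          simpa using ha0 k
        unfold Fs minExtSemiSq at hk
        rw [ENNReal.mul_iInf_of_ne hpos ENNReal.ofReal_ne_top] at hk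
        obtain ⟨v, hv⟩ := iInf_lt_iff.1 hk
        rw [ENNReal.mul_iInf_of_ne hpos ENNReal.ofReal_ne_top] at hv
        obtain ⟨hv1, hv2⟩ := iInf_lt_iff.1 hv
        exact ⟨v, hv1, hv2⟩
      have hvi : IntegrableOn v Ω := (l2_integrable hvm hv2).integrable (by norm_num)
      have hs0 := (hsk k).1
      have hs1 := (hsk k).2
      have hkey := key hN0 (fk N (sk k) (ε k) δ) (fk_measurable _ _ _ _) _ δ
        (fk_nonneg N _ _ δ hs1 (hε0 k)) (fk_le N _ _ δ hs0 hs1 (hε0 k)) (fk_supp N _ _ δ)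
        (Ω.indicator v) (hvm.indicator hΩo.measurableSet)
        ((integrable_indicator_iff hΩo.measurableSet).2 hvi) φ hφ1 hφ.2.1 L hL (M : ℝ) M.2
        ((energy_bound (sk k) (ε k) δ hs1 (hε0 k) Ω v hvm φ hδs).trans
          (by rw [ENNReal.ofReal_coe_nnreal]; exact hvM.le))
      rw [fk_A N hN0 (sk k) (ε k) δ hs1 (hε0 k) (hεδ k)] at hkey
      have e1 : ∫ x, Ω.indicator v x * dv φ x = ∫ x in Ω, uk k x * dv φ x := by
        have : ∀ x, Ω.indicator v x * dv φ x = Ω.indicator (fun x => v x * dv φ x) x := by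
          intro x; by_cases hx : x ∈ Ω <;> simp [hx]
        simp only [this]
        rw [integral_indicator hΩo.measurableSet]
        refine integral_congr_ae ?_
        filter_upwards [hvu] with x hx
        rw [hx]
      have e2 : ∫ x, |Ω.indicator v x| = ∫ x in Ω, |uk k x| := by
        have : ∀ x, |Ω.indicator v x| = Ω.indicator (fun x => |v x|) x := by
          intro x; by_cases hx : x ∈ Ω <;> simp [hx]
        simp only [this]
        rw [integral_indicator hΩo.measurableSet]
        refine integral_congr_ae ?_
        filter_upwards [hvu] with x hx
        rw [hx]
      rw [e1, e2] at hkey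
      refine hkey.trans ?_
      have hB := fk_B N hN0 (sk k) (ε k) δ hs1 (hε0 k) (hεδ k) hδ1
      have hW : 0 ≤ ∫ x in Ω, |uk k x| := integral_nonneg fun x => abs_nonneg _
      gcongr
    have hl : Tendsto (fun k => 2 * A k * ∫ x in Ω, uk k x * dv φ x) atTop
        (𝓝 (2 * K * ∫ x in Ω, u x * dv φ x)) := (hAt.const_mul 2).mul hIt
    have hr : Tendsto (fun k => (M : ℝ) + A k * (∫ x, ‖φ x‖ ^ 2) +
          2 * (L * (N * volume.real (Metric.ball (0 : Euc N) 1) * (1 - sk k)) *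
            ∫ x in Ω, |uk k x|)) atTop
        (𝓝 ((M : ℝ) + K * (∫ x, ‖φ x‖ ^ 2) +
          2 * (L * (N * volume.real (Metric.ball (0 : Euc N) 1) * 0) * ∫ x in Ω, |u x|))) :=
      ((hAt.mul_const _).const_add _).add ((((ha.const_mul _).const_mul L).mul habs).const_mul 2)
    have hfin := le_of_tendsto_of_tendsto_of_frequently hl hr hineq
    simpa using hfin
  have hg := weak_grad Ω u hui (M : ℝ) K M.2 hK hmain
  have hc := omega_ineq N hN
  have hle : F1 N Ω u ≤ M := by
    unfold F1
    calc ENNReal.ofReal (omegaPrev N / (2 * N)) * gradSq N Ω u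
        ≤ ENNReal.ofReal K * ENNReal.ofReal ((M : ℝ) / K) :=
          mul_le_mul' (ENNReal.ofReal_le_ofReal hc) hg
      _ = M := by
          rw [← ENNReal.ofReal_mul hK.le, mul_div_cancel₀ _ hK.ne', ENNReal.ofReal_coe_nnreal]
  exact absurd hM2 (not_lt.2 hle)

end FracNeumann
end
end

section
/- Let N ≥ 2, s ∈ (0,1), let B ⊂ ℝ^N be an open ball centered at the origin, and let e ∈ 𝕊^{N−1}. Then for every u ∈ H^s_{B,0}, the polarization P_e u belongs to H^s_{B,0} and ∬_{ℝ^{2N}\(B^c×B^c)} |(P_e u)(x)−(P_e u)(y)|²/|x−y|^{N+2s} dx dy ≤ ∬_{ℝ^{2N}\(B^c×B^c)} |u(x)−u(y)|²/|x−y|^{N+2s} dx dy. -/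
open MeasureTheory Filter Topology Bornology Set
open scoped ENNReal NNReal

noncomputable section

namespace FracNeumann

lemma reflect_eq (N : ℕ) (e : Euc N) (he : ‖e‖ = 1) (x : Euc N) :
    reflect N e x = (ℝ ∙ e)ᗮ.reflection x := by
  rw [Submodule.reflection_orthogonal_apply, Submodule.reflection_singleton_apply, he, reflect,
    real_inner_comm]
  simp [two_smul, two_mul, add_smul]

lemma reflect_invol (N : ℕ) (e : Euc N) (he : ‖e‖ = 1) (x : Euc N) :
    reflect N e (reflect N e x) = x := by
  simp only [reflect_eq N e he]
  exact Submodule.reflection_reflection _ x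

lemma reflect_norm (N : ℕ) (e : Euc N) (he : ‖e‖ = 1) (x : Euc N) :
    ‖reflect N e x‖ = ‖x‖ := by
  rw [reflect_eq N e he]
  exact LinearIsometryEquiv.norm_map _ x

lemma reflect_sub (N : ℕ) (e : Euc N) (he : ‖e‖ = 1) (x y : Euc N) :
    reflect N e x - reflect N e y = reflect N e (x - y) := by
  simp only [reflect_eq N e he, map_sub]

lemma reflect_mp (N : ℕ) (e : Euc N) (he : ‖e‖ = 1) :
    MeasurePreserving (reflect N e) volume volume := by
  have : reflect N e = (ℝ ∙ e)ᗮ.reflection := funext (reflect_eq N e he)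
  rw [this]
  exact LinearIsometryEquiv.measurePreserving _

lemma reflect_inner (N : ℕ) (e : Euc N) (he : ‖e‖ = 1) (x : Euc N) :
    inner ℝ (reflect N e x) e = - inner ℝ x e := by
  rw [reflect, inner_sub_left, real_inner_smul_left, real_inner_self_eq_norm_sq, he]
  ring

lemma kern_rr (N : ℕ) (s : ℝ) (e : Euc N) (he : ‖e‖ = 1) (x y : Euc N) :
    kern N s (reflect N e x) (reflect N e y) = kern N s x y := by
  rw [kern, kern, reflect_sub N e he, reflect_norm N e he]

lemma kern_rl (N : ℕ) (s : ℝ) (e : Euc N) (he : ‖e‖ = 1) (x y : Euc N) :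
    kern N s (reflect N e x) y = kern N s x (reflect N e y) := by
  rw [← kern_rr N s e he, reflect_invol N e he]

lemma norm_le_refl (N : ℕ) (e : Euc N) (he : ‖e‖ = 1) (x y : Euc N)
    (hx : 0 ≤ (inner ℝ x e : ℝ)) (hy : 0 ≤ (inner ℝ y e : ℝ)) :
    ‖x - y‖ ≤ ‖x - reflect N e y‖ := by
  apply le_of_sq_le_sq _ (norm_nonneg _)
  have h : x - reflect N e y = (x - y) + (2 * (inner ℝ y e : ℝ)) • e := by
    rw [reflect]; abel
  rw [h, norm_add_sq_real, inner_smul_right, inner_sub_left, norm_smul, he, mul_one,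
    Real.norm_eq_abs, sq_abs]
  nlinarith [mul_nonneg hx hy]

/-- The four-point sum. -/
def G4 (N : ℕ) (s : ℝ) (e : Euc N) (u : Euc N → ℝ) (x y : Euc N) : ℝ :=
  (u x - u y) ^ 2 / kern N s x y
    + (u (reflect N e x) - u y) ^ 2 / kern N s (reflect N e x) y
    + (u x - u (reflect N e y)) ^ 2 / kern N s x (reflect N e y)
    + (u (reflect N e x) - u (reflect N e y)) ^ 2 / kern N s (reflect N e x) (reflect N e y)

lemma G4_left (N : ℕ) (s : ℝ) (e : Euc N) (he : ‖e‖ = 1) (u : Euc N → ℝ) (x y : Euc N) :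
    G4 N s e u (reflect N e x) y = G4 N s e u x y := by
  simp only [G4, reflect_invol N e he]; ring

lemma G4_right (N : ℕ) (s : ℝ) (e : Euc N) (he : ‖e‖ = 1) (u : Euc N → ℝ) (x y : Euc N) :
    G4 N s e u x (reflect N e y) = G4 N s e u x y := by
  simp only [G4, reflect_invol N e he]; ring

lemma pol_pos (N : ℕ) (e : Euc N) (u : Euc N → ℝ) (x : Euc N)
    (hx : 0 ≤ (inner ℝ x e : ℝ)) : polarize N e u x = min (u x) (u (reflect N e x)) := by
  rw [polarize, if_pos hx]

lemma pol_neg (N : ℕ) (e : Euc N) (he : ‖e‖ = 1) (u : Euc N → ℝ) (x : Euc N)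
    (hx : 0 ≤ (inner ℝ x e : ℝ)) :
    polarize N e u (reflect N e x) = max (u x) (u (reflect N e x)) := by
  rcases hx.eq_or_lt with h | h
  · have : reflect N e x = x := by simp [reflect, ← h]
    rw [this, polarize, if_pos hx, this]; simp
  · rw [polarize, if_neg (by rw [reflect_inner N e he]; linarith), reflect_invol N e he, max_comm]

lemma alg (a b c d w v : ℝ) (hv : v ≤ w) :
    (min a b - min c d) ^ 2 * w + (max a b - min c d) ^ 2 * v + (min a b - max c d) ^ 2 * v
      + (max a b - max c d) ^ 2 * w
    ≤ (a - c) ^ 2 * w + (b - c) ^ 2 * v + (a - d) ^ 2 * v + (b - d) ^ 2 * w := by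
  have h0 := sub_nonneg.2 hv
  rcases le_total a b with h | h <;> rcases le_total c d with h' | h' <;>
    simp only [h, h', min_eq_left, min_eq_right, max_eq_left, max_eq_right] <;>
    nlinarith [mul_nonneg h0 (mul_nonneg (sub_nonneg.2 h) (sub_nonneg.2 h'))]

lemma G4_le_pos (N : ℕ) (s : ℝ) (hs : 0 < s) (e : Euc N) (he : ‖e‖ = 1) (u : Euc N → ℝ)
    (x y : Euc N) (hx : 0 ≤ (inner ℝ x e : ℝ)) (hy : 0 ≤ (inner ℝ y e : ℝ)) :
    G4 N s e (polarize N e u) x y ≤ G4 N s e u x y := by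
  simp only [G4, kern_rr N s e he, kern_rl N s e he]
  rw [pol_pos N e u x hx, pol_pos N e u y hy, pol_neg N e he u x hx, pol_neg N e he u y hy]
  rcases eq_or_ne x y with rfl | hxy
  · apply le_of_eq
    rcases le_total (u x) (u (reflect N e x)) with h | h <;> simp [h] <;> ring
  · simp only [div_eq_mul_inv]
    apply alg
    have h1 : 0 < ‖x - y‖ := norm_pos_iff.2 (sub_ne_zero.2 hxy)
    unfold kern
    have h2 : 0 < ‖x - y‖ ^ ((N : ℝ) + 2 * s) := Real.rpow_pos_of_pos h1 _
    apply inv_anti₀ h2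
    exact Real.rpow_le_rpow h1.le (norm_le_refl N e he x y hx hy) (by positivity)

lemma G4_le (N : ℕ) (s : ℝ) (hs : 0 < s) (e : Euc N) (he : ‖e‖ = 1) (u : Euc N → ℝ)
    (x y : Euc N) :
    G4 N s e (polarize N e u) x y ≤ G4 N s e u x y := by
  wlog hx : 0 ≤ (inner ℝ x e : ℝ) generalizing x
  · have := this (reflect N e x) (by rw [reflect_inner N e he]; linarith)
    rwa [G4_left N s e he, G4_left N s e he] at this
  wlog hy : 0 ≤ (inner ℝ y e : ℝ) generalizing y
  · have := this (reflect N e y) (by rw [reflect_inner N e he]; linarith)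
    rwa [G4_right N s e he, G4_right N s e he] at this
  exact G4_le_pos N s hs e he u x y hx hy

lemma kern_nonneg (N : ℕ) (s : ℝ) (x y : Euc N) : 0 ≤ kern N s x y :=
  Real.rpow_nonneg (norm_nonneg _) _

lemma meas_F (N : ℕ) (s : ℝ) (u : Euc N → ℝ) (hu : Measurable u) :
    Measurable fun q : Euc N × Euc N =>
      ENNReal.ofReal ((u q.1 - u q.2) ^ 2 / kern N s q.1 q.2) := by
  unfold kern
  fun_prop

lemma reg_meas (N : ℕ) (Ω : Set (Euc N)) : MeasurableSet (reg N Ω) :=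
  (isClosed_closure.measurableSet.preimage measurable_fst).union
      (isClosed_closure.measurableSet.preimage measurable_snd)

lemma key_T (N : ℕ) (Ω : Set (Euc N)) (F : Euc N × Euc N → ℝ≥0∞) (hF : Measurable F)
    (T : Euc N × Euc N → Euc N × Euc N) (hT : MeasurePreserving T volume volume)
    (hr : T ⁻¹' reg N Ω = reg N Ω) :
    ∫⁻ q in reg N Ω, F (T q) = ∫⁻ q in reg N Ω, F q := by
  have h := (hT.restrict_preimage (reg_meas N Ω)).lintegral_comp hF
  rw [hr] at h
  exact h

lemma four_int (N : ℕ) (e : Euc N) (he : ‖e‖ = 1) (Ω : Set (Euc N))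
    (hΩ : ∀ x, reflect N e x ∈ closure Ω ↔ x ∈ closure Ω)
    (F : Euc N × Euc N → ℝ≥0∞) (hF : Measurable F) :
    ∫⁻ q in reg N Ω, (F q + F (reflect N e q.1, q.2) + F (q.1, reflect N e q.2)
      + F (reflect N e q.1, reflect N e q.2)) = 4 * ∫⁻ q in reg N Ω, F q := by
  have hσ := reflect_mp N e he
  have hσm := hσ.measurable
  have k1 := key_T N Ω F hF (Prod.map (reflect N e) id) (hσ.prod (MeasurePreserving.id _))
    (by ext q; simp [reg, hΩ])
  have k2 := key_T N Ω F hF (Prod.map id (reflect N e)) ((MeasurePreserving.id _).prod hσ)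
    (by ext q; simp [reg, hΩ])
  have k3 := key_T N Ω F hF (Prod.map (reflect N e) (reflect N e)) (hσ.prod hσ)
    (by ext q; simp [reg, hΩ])
  simp only [Prod.map, id] at k1 k2 k3
  have m1 : Measurable fun q : Euc N × Euc N => F (reflect N e q.1, q.2) := by fun_prop
  have m2 : Measurable fun q : Euc N × Euc N => F (q.1, reflect N e q.2) := by fun_prop
  have m12 : Measurable fun q : Euc N × Euc N => F q + F (reflect N e q.1, q.2) := hF.add m1
  have m123 : Measurable fun q : Euc N × Euc N =>
      F q + F (reflect N e q.1, q.2) + F (q.1, reflect N e q.2) := m12.add m2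
  rw [lintegral_add_left m123, lintegral_add_left m12, lintegral_add_left hF, k1, k2, k3]
  generalize (∫⁻ q in reg N Ω, F q) = I
  ring

lemma G4_ofReal (N : ℕ) (s : ℝ) (e : Euc N) (u : Euc N → ℝ) (x y : Euc N) :
    ENNReal.ofReal (G4 N s e u x y) =
      ENNReal.ofReal ((u x - u y) ^ 2 / kern N s x y)
      + ENNReal.ofReal ((u (reflect N e x) - u y) ^ 2 / kern N s (reflect N e x) y)
      + ENNReal.ofReal ((u x - u (reflect N e y)) ^ 2 / kern N s x (reflect N e y))
      + ENNReal.ofReal ((u (reflect N e x) - u (reflect N e y)) ^ 2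
          / kern N s (reflect N e x) (reflect N e y)) := by
  have p : ∀ a x y, 0 ≤ a ^ 2 / kern N s x y :=
    fun a x y => div_nonneg (sq_nonneg _) (kern_nonneg N s x y)
  rw [G4, ENNReal.ofReal_add (add_nonneg (add_nonneg (p _ _ _) (p _ _ _)) (p _ _ _)) (p _ _ _),
    ENNReal.ofReal_add (add_nonneg (p _ _ _) (p _ _ _)) (p _ _ _),
    ENNReal.ofReal_add (p _ _ _) (p _ _ _)]

lemma four_mul_semiSq (N : ℕ) (s : ℝ) (e : Euc N) (he : ‖e‖ = 1) (Ω : Set (Euc N))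
    (hΩ : ∀ x, reflect N e x ∈ closure Ω ↔ x ∈ closure Ω)
    (u : Euc N → ℝ) (hu : Measurable u) :
    4 * semiSq N s Ω u = ∫⁻ q in reg N Ω, ENNReal.ofReal (G4 N s e u q.1 q.2) := by
  simp only [G4_ofReal]
  exact (four_int N e he Ω hΩ _ (meas_F N s u hu)).symm

lemma pol_meas (N : ℕ) (e : Euc N) (he : ‖e‖ = 1) (u : Euc N → ℝ) (hu : Measurable u) :
    Measurable (polarize N e u) := by
  have hσm := (reflect_mp N e he).measurable
  unfold polarize
  refine Measurable.ite ?_ (hu.min (hu.comp hσm)) (hu.max (hu.comp hσm))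
  exact measurableSet_le measurable_const (by fun_prop)


/-- Proposition 4.3, inequality part: polarization does not increase the
`H^s_{B,0}`-seminorm. -/
theorem statement13 (N : ℕ) (hN : 2 ≤ N) (s : ℝ) (hs : s ∈ Set.Ioo (0 : ℝ) 1)
    (R : ℝ) (hR : 0 < R) (B : Set (Euc N)) (hB : B = Metric.ball (0 : Euc N) R)
    (e : Euc N) (he : ‖e‖ = 1)
    (u : Euc N → ℝ) (hu : memHs N s B u) :
    memHs N s B (polarize N e u) ∧
      semiSq N s B (polarize N e u) ≤ semiSq N s B u := by
  obtain ⟨hm, hl, hsemi⟩ := hu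
  have hcl : ∀ x, reflect N e x ∈ closure B ↔ x ∈ closure B := by
    intro x
    rw [hB, closure_ball _ hR.ne']
    simp [reflect_norm N e he]
  have hpm := pol_meas N e he u hm
  have hle : semiSq N s B (polarize N e u) ≤ semiSq N s B u := by
    have h : 4 * semiSq N s B (polarize N e u) ≤ 4 * semiSq N s B u := by
      rw [four_mul_semiSq N s e he B hcl _ hpm, four_mul_semiSq N s e he B hcl _ hm]
      exact lintegral_mono fun q => ENNReal.ofReal_le_ofReal (G4_le N s hs.1 e he u q.1 q.2)
    exact (ENNReal.mul_le_mul_iff_right (by norm_num) (by norm_num)).1 h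
  refine ⟨⟨hpm, ?_, hle.trans_lt hsemi⟩, hle⟩
  have hσ := reflect_mp N e he
  have hBm : MeasurableSet B := by rw [hB]; exact measurableSet_ball
  have hpre : reflect N e ⁻¹' B = B := by
    ext x; rw [hB]; simp [reflect_norm N e he]
  have hf : Measurable fun x => ENNReal.ofReal ((u x) ^ 2) := by fun_prop
  have h1 : ∫⁻ x in B, ENNReal.ofReal ((u (reflect N e x)) ^ 2) = l2sq N B u := by
    have h := (hσ.restrict_preimage hBm).lintegral_comp hf
    rw [hpre] at h
    exact h
  have h2 : l2sq N B (polarize N e u) ≤ l2sq N B u + l2sq N B u := by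
    nth_rewrite 2 [← h1]
    unfold l2sq
    rw [← lintegral_add_left hf]
    refine lintegral_mono fun x => ?_
    rw [← ENNReal.ofReal_add (sq_nonneg _) (sq_nonneg _)]
    apply ENNReal.ofReal_le_ofReal
    unfold polarize
    split_ifs
    · rcases min_choice (u x) (u (reflect N e x)) with h | h <;> rw [h] <;> nlinarith [sq_nonneg (u x), sq_nonneg (u (reflect N e x))]
    · rcases max_choice (u x) (u (reflect N e x)) with h | h <;> rw [h] <;> nlinarith [sq_nonneg (u x), sq_nonneg (u (reflect N e x))]
  exact h2.trans_lt (ENNReal.add_lt_top.2 ⟨hl, hl⟩)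

end FracNeumann
end
end
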